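/- Let K be a field and R a nonzero associative unital K-algebra. Suppose n, n' ∈ ℕ and a, b : Fin n → R, a', b' : Fin n' → R satisfy ∑ i, a i * b i = 1, b j * a k = (if j = k then 1 else 0) for all j k : Fin n, and likewise ∑ i, a' i * b' i = 1, b' j * a' k = (if j = k then 1 else 0) for all j k : Fin n'. Then the following are equivalent: (1) for every K-algebra S, every K-algebra homomorphism f : R →ₐ[K] S and every t ∈ S, ∑ i, f (a i) * t * f (b i) = ∑ j, f (a' j) * t * f (b' j); (2) n = n' and, identifying Fin n' with Fin n, there exists an invertible matrix U ∈ GL(Fin n, K) such that a' j = ∑ i, a i * algebraMap K R (U i j) for all j, and b' i = ∑ j, algebraMap K R (U⁻¹ i j) * b j for all i. -/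

import Mathlib

/-!
The map `t ↦ ∑ i, f (a i) * t * f (b i)` is governed by the tensor `∑ i, a i ⊗ b i` in `R ⊗[K] R`.
Conversely it determines this tensor: let `R` act on `R ⊗[K] R` through the left factor, take for
`t` the swap, and evaluate at `1 ⊗ 1`. If `(a, b)` and `(a', b')` have the same tensor, multiplying
by `b' k` on the left and by `a m` on the right gives `x ⊗ 1 = 1 ⊗ x` for `x = b' k * a m`, which
forces `x` to be a scalar. These scalars form a change-of-basis matrix.
-/

universe u v

open Matrix TensorProduct

section Sandwich

variable {K R S : Type*} [CommSemiring K] [Semiring R] [Algebra K R] [Semiring S] [Algebra K S]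

/-- The linear map `x ⊗ y ↦ f x * t * f y`. On the tensor `∑ i, a i ⊗ b i` it takes the value at `t`
of the inner endomorphism given by `a` and `b`. -/
def sandwich (f : R →ₐ[K] S) (t : S) : R ⊗[K] R →ₗ[K] S :=
  LinearMap.mul' K S ∘ₗ TensorProduct.map (LinearMap.mulRight K t ∘ₗ f.toLinearMap) f.toLinearMap

@[simp]
theorem sandwich_tmul (f : R →ₐ[K] S) (t : S) (x y : R) :
    sandwich f t (x ⊗ₜ y) = f x * t * f y :=
  rfl

theorem sandwich_lsmul_comm_apply_one (z : R ⊗[K] R) :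
    sandwich (Algebra.lsmul K K (R ⊗[K] R)) (TensorProduct.comm K R R).toLinearMap z 1 = z := by
  induction z with
  | zero => simp
  | tmul x y => simp [Algebra.TensorProduct.one_def, TensorProduct.smul_tmul']
  | add z w hz hw => simp [hz, hw]

end Sandwich

theorem forall_sum_mul_mul_eq_iff_sum_tmul_eq {K : Type v} [CommSemiring K] {R : Type u} [Ring R]
    [Algebra K R] {ι ι' : Type*} [Fintype ι] [Fintype ι'] {a b : ι → R} {a' b' : ι' → R} :
    (∀ (S : Type u) [Ring S] [Algebra K S] (f : R →ₐ[K] S) (t : S),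
        ∑ i, f (a i) * t * f (b i) = ∑ j, f (a' j) * t * f (b' j)) ↔
      ∑ i, a i ⊗ₜ[K] b i = ∑ j, a' j ⊗ₜ[K] b' j := by
  simp only [← sandwich_tmul, ← map_sum]
  refine ⟨fun H => ?_, fun h S _ _ f t => congrArg (sandwich f t) h⟩
  have := LinearMap.congr_fun (H (Module.End K (R ⊗[K] R)) (Algebra.lsmul K K (R ⊗[K] R))
    (TensorProduct.comm K R R).toLinearMap) 1
  simpa only [sandwich_lsmul_comm_apply_one] using this

theorem mul_eq_one_of_map_mul_map_eq_one {α β m n : Type*} [Semiring α] [Semiring β] [Fintype n]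
    [DecidableEq m] {f : α →+* β} (hf : Function.Injective f) {U : Matrix m n α} {V : Matrix n m α}
    (h : U.map f * V.map f = 1) : U * V = 1 :=
  map_injective hf <|
    calc (U * V).map f = U.map f * V.map f := Matrix.map_mul
      _ = 1 := h
      _ = (1 : Matrix m m α).map f := (Matrix.map_one f (map_zero f) (map_one f)).symm

section Semiring

variable {K R ι ι' : Type*} [CommSemiring K] [Semiring R] [Algebra K R] [Fintype ι] [Fintype ι']

theorem algebraMap_apply_eq_of_tmul_one_eq_one_tmul {g : R →ₗ[K] K} (hg : g 1 = 1) {x : R}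
    (hx : x ⊗ₜ[K] 1 = 1 ⊗ₜ[K] x) : algebraMap K R (g x) = x := by
  simpa [hg, Algebra.algebraMap_eq_smul_one] using
    congrArg (fun z => TensorProduct.lid K R (g.rTensor R z)) hx

theorem sum_vecMul_tmul_eq_sum_tmul_mulVec (a : ι → R) (U : Matrix ι ι' K) (b : ι' → R) :
    ∑ j, (a ᵥ* U.map (algebraMap K R)) j ⊗ₜ[K] b j
      = ∑ i, a i ⊗ₜ[K] (U.map (algebraMap K R) *ᵥ b) i := by
  simp only [vecMul, mulVec, dotProduct, map_apply, ← Algebra.commutes, ← Algebra.smul_def,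
    sum_tmul, tmul_sum, smul_tmul]
  exact Finset.sum_comm

theorem sum_vecMul_tmul_mulVec_of_mul_eq_one [DecidableEq ι] {U : Matrix ι ι' K}
    {V : Matrix ι' ι K} (hUV : U * V = 1) (a b : ι → R) :
    ∑ j, (a ᵥ* U.map (algebraMap K R)) j ⊗ₜ[K] (V.map (algebraMap K R) *ᵥ b) j
      = ∑ i, a i ⊗ₜ[K] b i := by
  rw [sum_vecMul_tmul_eq_sum_tmul_mulVec, mulVec_mulVec, ← Matrix.map_mul, hUV,
    Matrix.map_one _ (map_zero _) (map_one _), one_mulVec]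

/-- Leavitt's relations: the row `a` and the column `b` are mutually inverse matrices, so that they
define an isomorphism between the right `R`-modules `R` and `ι → R`. -/
structure IsLeavittPair [DecidableEq ι] (a b : ι → R) : Prop where
  dotProduct_eq_one : a ⬝ᵥ b = 1
  vecMulVec_eq_one : vecMulVec b a = 1

namespace IsLeavittPair

variable [DecidableEq ι] [DecidableEq ι'] {a b : ι → R} {a' b' : ι' → R}

theorem vecMulVec_mul_vecMulVec_eq_one (h : IsLeavittPair a b) (h' : IsLeavittPair a' b') :
    vecMulVec b a' * vecMulVec b' a = 1 := by
  rw [vecMulVec_mul_vecMulVec, h'.dotProduct_eq_one, one_smul, h.vecMulVec_eq_one]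

theorem mul_tmul_one_eq_one_tmul_mul (h : IsLeavittPair a b) (h' : IsLeavittPair a' b')
    (hT : ∑ i, a i ⊗ₜ[K] b i = ∑ j, a' j ⊗ₜ[K] b' j) (k : ι') (m : ι) :
    (b' k * a m) ⊗ₜ[K] 1 = 1 ⊗ₜ[K] (b' k * a m) := by
  have hba (i : ι) : b i * a m = (1 : Matrix ι ι R) i m := by rw [← h.vecMulVec_eq_one]; rfl
  have hba' (j : ι') : b' k * a' j = (1 : Matrix ι' ι' R) k j := by
    rw [← h'.vecMulVec_eq_one]; rfl
  calc (b' k * a m) ⊗ₜ[K] (1 : R)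
      = (b' k ⊗ₜ 1) * (∑ i, a i ⊗ₜ b i) * (1 ⊗ₜ a m) := by
        simp [Finset.mul_sum, Finset.sum_mul, hba, one_apply, tmul_ite]
    _ = (b' k ⊗ₜ 1) * (∑ j, a' j ⊗ₜ b' j) * (1 ⊗ₜ a m) := by rw [hT]
    _ = 1 ⊗ₜ (b' k * a m) := by simp [Finset.mul_sum, hba', one_apply, ite_tmul]

theorem map_algebraMap_map_vecMulVec (h : IsLeavittPair a b) (h' : IsLeavittPair a' b')
    {g : R →ₗ[K] K} (hg : g 1 = 1) (hT : ∑ i, a i ⊗ₜ[K] b i = ∑ j, a' j ⊗ₜ[K] b' j) :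
    ((vecMulVec b' a).map g).map (algebraMap K R) = vecMulVec b' a :=
  Matrix.ext fun k m =>
    algebraMap_apply_eq_of_tmul_one_eq_one_tmul hg (h.mul_tmul_one_eq_one_tmul_mul h' hT k m)

theorem sum_tmul_eq_iff_exists_matrix (h : IsLeavittPair a b) (h' : IsLeavittPair a' b')
    {g : R →ₗ[K] K} (hg : g 1 = 1) :
    ∑ i, a i ⊗ₜ[K] b i = ∑ j, a' j ⊗ₜ[K] b' j ↔
      ∃ (U : Matrix ι ι' K) (V : Matrix ι' ι K), U * V = 1 ∧ V * U = 1 ∧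
        a' = a ᵥ* U.map (algebraMap K R) ∧ b' = V.map (algebraMap K R) *ᵥ b := by
  constructor
  · intro hT
    have hU := h'.map_algebraMap_map_vecMulVec h hg hT.symm
    have hV := h.map_algebraMap_map_vecMulVec h' hg hT
    have hinj : Function.Injective (algebraMap K R) :=
      Function.LeftInverse.injective (g := g) fun c => by
        rw [Algebra.algebraMap_eq_smul_one, map_smul, hg, smul_eq_mul, mul_one]
    refine ⟨(vecMulVec b a').map g, (vecMulVec b' a).map g,
      mul_eq_one_of_map_mul_map_eq_one hinj ?_, mul_eq_one_of_map_mul_map_eq_one hinj ?_, ?_, ?_⟩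
    · rw [hU, hV, h.vecMulVec_mul_vecMulVec_eq_one h']
    · rw [hU, hV, h'.vecMulVec_mul_vecMulVec_eq_one h]
    · rw [hU, vecMul_vecMulVec, h.dotProduct_eq_one, one_smul]
    · rw [hV, vecMulVec_mulVec, h.dotProduct_eq_one, MulOpposite.op_one, one_smul]
  · rintro ⟨U, V, hUV, -, rfl, rfl⟩
    exact (sum_vecMul_tmul_mulVec_of_mul_eq_one hUV a b).symm

end IsLeavittPair

end Semiring

theorem inner_endomorphism_vectors_agree_iff_general
    {K : Type v} [CommRing K] {R : Type u} [Ring R] [Algebra K R] [Nontrivial R]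
    {g : R →ₗ[K] K} (hg : g 1 = 1) {n n' : ℕ} {a b : Fin n → R} {a' b' : Fin n' → R}
    (hab : IsLeavittPair a b) (hab' : IsLeavittPair a' b') :
    (∀ (S : Type u) [Ring S] [Algebra K S] (f : R →ₐ[K] S) (t : S),
        ∑ i, f (a i) * t * f (b i) = ∑ j, f (a' j) * t * f (b' j)) ↔
      ∃ h : n = n', ∃ U : GL (Fin n) K,
        (∀ j : Fin n, a' (Fin.cast h j)
          = ∑ i, a i * algebraMap K R ((U : Matrix (Fin n) (Fin n) K) i j)) ∧
        (∀ i : Fin n, b' (Fin.cast h i)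
          = ∑ j, algebraMap K R (((U⁻¹ : GL (Fin n) K) : Matrix (Fin n) (Fin n) K) i j) * b j) := by
  rw [forall_sum_mul_mul_eq_iff_sum_tmul_eq, hab.sum_tmul_eq_iff_exists_matrix hab' hg]
  constructor
  · rintro ⟨U, V, hUV, hVU, ha, hb⟩
    have : Nontrivial K := (algebraMap K R).domain_nontrivial
    obtain rfl : n = n' := by simpa using square_of_invertible U V hUV hVU
    exact ⟨rfl, ⟨U, V, hUV, hVU⟩, congrFun ha, congrFun hb⟩
  · rintro ⟨rfl, U, ha, hb⟩
    exact ⟨U, ↑U⁻¹, U.mul_inv, U.inv_mul, funext ha, funext hb⟩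

theorem inner_endomorphism_vectors_agree_iff
    (K : Type v) [Field K] (R : Type u) [Ring R] [Algebra K R] [Nontrivial R]
    (n n' : ℕ) (a b : Fin n → R) (a' b' : Fin n' → R)
    (hab₁ : ∑ i, a i * b i = 1)
    (hab₂ : ∀ j k : Fin n, b j * a k = if j = k then 1 else 0)
    (hab₁' : ∑ i, a' i * b' i = 1)
    (hab₂' : ∀ j k : Fin n', b' j * a' k = if j = k then 1 else 0) :
    (∀ (S : Type u) [Ring S] [Algebra K S] (f : R →ₐ[K] S) (t : S),
        ∑ i, f (a i) * t * f (b i) = ∑ j, f (a' j) * t * f (b' j)) ↔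
      ∃ h : n = n', ∃ U : GL (Fin n) K,
        (∀ j : Fin n, a' (Fin.cast h j)
          = ∑ i, a i * algebraMap K R ((U : Matrix (Fin n) (Fin n) K) i j)) ∧
        (∀ i : Fin n, b' (Fin.cast h i)
          = ∑ j, algebraMap K R (((U⁻¹ : GL (Fin n) K) : Matrix (Fin n) (Fin n) K) i j) * b j) := by
  obtain ⟨g, hg⟩ := Module.Projective.exists_dual_eq_one K (one_ne_zero (α := R))
  exact inner_endomorphism_vectors_agree_iff_general hg ⟨hab₁, Matrix.ext hab₂⟩
    ⟨hab₁', Matrix.ext hab₂'⟩
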